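/- arXiv:2203.11435 — 4 statements merged into one kernel-verified Lean document; each statement's English description precedes it below -/
import Mathlib

section
/- Let X be a Banach space, Y a normed space, P a topological space, and f : X × P → Y a single-valued mapping with f(x̄, p̄) = 0. Assume: the mapping f(·, p̄) is closed around (x̄, 0) (i.e., its graph intersected with the product of the closures of some neighborhoods of x̄ and 0 is closed); the mapping f(x̄, ·) is continuous at p̄; there exist neighborhoods U of x̄ and O of p̄ and a number ℓ ≥ 0 such that ‖(f(x₁, p) − f(x₁, p̄)) − (f(x₂, p) − f(x₂, p̄))‖ ≤ ℓ‖x₁ − x₂‖ for all x₁, x₂ ∈ U and p ∈ O; and f(·, p̄) has the α-covering property around (x̄, 0) for some α > ℓ. Then there exist a neighborhood W of p̄ and a mapping σ : W → X such that f(σ(p), p) = 0 and ‖σ(p) − x̄‖ ≤ (α − ℓ)⁻¹ ‖f(x̄, p)‖ for all p ∈ W. -/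
/-!
For fixed `p` near `p₀` put `h x = f x p₀` and `g x = f x p - f x p₀`, so that `h` covers with
modulus `α` near `(x₀, 0)` and `g` is `ℓ`-Lipschitz near `x₀` with `ℓ < α`. A zero of `f · p` is a
solution of `h x = -g x`, found by Newton-type (Lyusternik–Graves) iteration: covering gives
`xₙ₊₁` with `h xₙ₊₁ = -g xₙ` and `‖xₙ₊₁ - xₙ‖ ≤ ‖h xₙ + g xₙ‖ / α`. As
`h xₙ₊₁ + g xₙ₊₁ = g xₙ₊₁ - g xₙ`, the residuals shrink by the factor `q = ℓ / α < 1`, so the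
iterates converge, at total distance at most `‖f x₀ p‖ / (α - ℓ)` from `x₀`, and closedness of the
graph of `h` identifies the limit. This is `exists_zero_of_covering`; what remains for the theorem
is to choose `p` so close to `p₀` that the iteration stays in the relevant neighborhoods.
-/

open Metric Filter

/-- `Φ` has the `α`-covering property on `U` relative to `V`:
`Φ(x) ∩ V + α r B_Y ⊆ Φ(x + r B_X)` whenever `x + r B_X ⊆ U` and `r > 0`. -/
def CoversOn {X Y : Type*} [NormedAddCommGroup X] [NormedAddCommGroup Y]
    (α : ℝ) (Φ : X → Set Y) (U : Set X) (V : Set Y) : Prop :=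
  ∀ x : X, ∀ r : ℝ, 0 < r → closedBall x r ⊆ U →
    ∀ y ∈ Φ x ∩ V, ∀ z : Y, ‖z‖ ≤ α * r → ∃ u ∈ closedBall x r, y + z ∈ Φ u

/-- `Φ` has the `α`-covering property around a point `(x₀, y₀)` of its graph. -/
def CoversAround {X Y : Type*} [NormedAddCommGroup X] [NormedAddCommGroup Y]
    (α : ℝ) (Φ : X → Set Y) (x₀ : X) (y₀ : Y) : Prop :=
  ∃ U ∈ nhds x₀, ∃ V ∈ nhds y₀, CoversOn α Φ U V

/-- `Φ` is Lipschitz-like on `U` relative to `V` with modulus `ℓ`: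
`Φ(x) ∩ V ⊆ Φ(u) + ℓ‖x − u‖ B_Y` for all `x, u ∈ U`. -/
def LipschitzLikeOn {X Y : Type*} [NormedAddCommGroup X] [NormedAddCommGroup Y]
    (ℓ : ℝ) (Φ : X → Set Y) (U : Set X) (V : Set Y) : Prop :=
  ∀ x ∈ U, ∀ u ∈ U, ∀ y ∈ Φ x ∩ V, ∃ v ∈ Φ u, ‖y - v‖ ≤ ℓ * ‖x - u‖

/-- `Φ` is closed around `(x₀, y₀)`: for some neighborhoods `U` of `x₀`, `V` of `y₀`,
the set `gph Φ ∩ (cl U × cl V)` is closed. -/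
def ClosedAround {X Y : Type*} [NormedAddCommGroup X] [NormedAddCommGroup Y]
    (Φ : X → Set Y) (x₀ : X) (y₀ : Y) : Prop :=
  ∃ U ∈ nhds x₀, ∃ V ∈ nhds y₀,
    IsClosed {q : X × Y | q.2 ∈ Φ q.1 ∧ q.1 ∈ closure U ∧ q.2 ∈ closure V}

/-- Inner (lower) semicontinuity of a set-valued mapping at a point. -/
def InnerSemicontinuousAt {P Y : Type*} [TopologicalSpace P] [TopologicalSpace Y]
    (G : P → Set Y) (p₀ : P) : Prop :=
  ∀ V : Set Y, IsOpen V → (G p₀ ∩ V).Nonempty → ∀ᶠ p in nhds p₀, (G p ∩ V).Nonempty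

/-- The covering property also holds with radius `0`, where it is trivial. -/
lemma CoversOn.exists_of_nonneg {X Y : Type*} [NormedAddCommGroup X] [NormedAddCommGroup Y]
    {α : ℝ} {h : X → Y} {U : Set X} {V : Set Y} (hc : CoversOn α (fun x => {h x}) U V)
    {x : X} {r : ℝ} (hr : 0 ≤ r) (hU : closedBall x r ⊆ U) (hV : h x ∈ V) {y : Y}
    (hy : ‖y - h x‖ ≤ α * r) : ∃ u, dist u x ≤ r ∧ h u = y := by
  rcases hr.eq_or_lt with rfl | hr
  · refine ⟨x, by simp, ?_⟩
    have : y - h x = 0 := norm_le_zero_iff.mp (by simpa using hy)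
    exact (sub_eq_zero.mp this).symm
  · obtain ⟨u, hu, hu'⟩ := hc x r hr hU (h x) ⟨rfl, hV⟩ (y - h x) hy
    refine ⟨u, hu, ?_⟩
    have : h x + (y - h x) = h u := hu'
    rw [← this]; abel

/-- A quantitative Lyusternik–Graves iteration: if `h` covers with modulus `α`, has a locally
closed graph, and `g` is `ℓ`-Lipschitz with `ℓ < α`, then `h + g` has a zero at distance at most
`R = ‖h x₀ + g x₀‖ / (α - ℓ)` from `x₀`, provided the ball of radius `R` and the values of `h` met
during the iteration stay in the given neighborhoods. -/
lemma exists_zero_of_covering {X Y : Type*} [NormedAddCommGroup X] [CompleteSpace X]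
    [NormedAddCommGroup Y] {h g : X → Y} {x₀ : X} {ℓ α R η : ℝ} {U U' : Set X} {V V' : Set Y}
    (hℓ : 0 ≤ ℓ) (hℓα : ℓ < α) (hR : ‖h x₀ + g x₀‖ = (α - ℓ) * R)
    (hc : CoversOn α (fun x => {h x}) U V) (hRU : closedBall x₀ R ⊆ U)
    (hcl : IsClosed {q : X × Y | q.2 = h q.1 ∧ q.1 ∈ closure U' ∧ q.2 ∈ closure V'})
    (hRU' : closedBall x₀ R ⊆ U')
    (hlip : ∀ x₁ ∈ closedBall x₀ R, ∀ x₂ ∈ closedBall x₀ R, ‖g x₁ - g x₂‖ ≤ ℓ * ‖x₁ - x₂‖)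
    (hηV : ball 0 η ⊆ V) (hηV' : ball 0 η ⊆ V') (hh : ‖h x₀‖ < η)
    (hgη : ‖g x₀‖ + ℓ * R < η) :
    ∃ x ∈ closedBall x₀ R, h x + g x = 0 := by
  have hα : 0 < α := hℓ.trans_lt hℓα
  have hR0 : 0 ≤ R := by
    have := norm_nonneg (h x₀ + g x₀)
    rw [hR] at this
    exact nonneg_of_mul_nonneg_right this (by linarith)
  obtain ⟨q, hq⟩ : ∃ q, q = ℓ / α := ⟨_, rfl⟩
  have hq0 : 0 ≤ q := by rw [hq]; positivity
  have hq1 : q < 1 := by rw [hq, div_lt_one hα]; exact hℓα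
  have hαq : α * q = ℓ := by rw [hq]; field_simp
  -- `R * (1 - q) * q ^ n` bounds the `n`-th step; these bounds telescope to `R * (1 - q ^ n)`.
  let A : ℕ → X → Prop := fun n x =>
    dist x x₀ ≤ R * (1 - q ^ n) ∧ ‖h x + g x‖ ≤ α * (R * (1 - q) * q ^ n) ∧ ‖h x‖ < η
  have hball : ∀ n x, dist x x₀ ≤ R * (1 - q ^ n) → x ∈ closedBall x₀ R := by
    intro n x hx
    have : 0 ≤ R * q ^ n := by positivity
    rw [mem_closedBall]; linarith
  have step : ∀ n x, ∃ u, A n x → A (n + 1) u ∧ dist u x ≤ R * (1 - q) * q ^ n ∧ h u = - g x := by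
    intro n x
    by_cases hA : A n x
    swap
    · exact ⟨x, fun h => absurd h hA⟩
    obtain ⟨h1, h2, h3⟩ := hA
    have hr : 0 ≤ R * (1 - q) * q ^ n :=
      mul_nonneg (mul_nonneg hR0 (by linarith)) (by positivity)
    have hsub : ∀ u, dist u x ≤ R * (1 - q) * q ^ n → dist u x₀ ≤ R * (1 - q ^ (n + 1)) := by
      intro u hu
      calc dist u x₀ ≤ dist u x + dist x x₀ := dist_triangle _ _ _
        _ ≤ R * (1 - q) * q ^ n + R * (1 - q ^ n) := add_le_add hu h1
        _ = R * (1 - q ^ (n + 1)) := by ring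
    obtain ⟨u, hu, hu'⟩ := hc.exists_of_nonneg (y := - g x) hr
      (fun u hu => hRU (hball _ u (hsub u hu))) (hηV (by simpa using h3))
      (by rw [show - g x - h x = -(h x + g x) by abel, norm_neg]; exact h2)
    have hxR := hball _ _ h1
    refine ⟨u, fun _ => ⟨⟨hsub u hu, ?_, ?_⟩, hu, hu'⟩⟩
    · calc ‖h u + g u‖ = ‖g u - g x‖ := by rw [hu']; congr 1; abel
        _ ≤ ℓ * ‖u - x‖ := hlip u (hball _ u (hsub u hu)) x hxR
        _ ≤ ℓ * (R * (1 - q) * q ^ n) := by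
          rw [← dist_eq_norm]; exact mul_le_mul_of_nonneg_left hu hℓ
        _ = α * (R * (1 - q) * q ^ (n + 1)) := by rw [← hαq]; ring
    · calc ‖h u‖ = ‖g x₀ + (g x - g x₀)‖ := by rw [hu', norm_neg]; congr 1; abel
        _ ≤ ‖g x₀‖ + ‖g x - g x₀‖ := norm_add_le _ _
        _ ≤ ‖g x₀‖ + ℓ * ‖x - x₀‖ := by
          gcongr; exact hlip x hxR x₀ (mem_closedBall_self hR0)
        _ ≤ ‖g x₀‖ + ℓ * R := by
          rw [← dist_eq_norm]; gcongr; exact hxR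
        _ < η := hgη
  choose F hF using step
  let s : ℕ → X := fun n => Nat.rec x₀ F n
  have hA : ∀ n, A n (s n) := by
    intro n
    induction n with
    | zero =>
      refine ⟨by simp [s], ?_, hh⟩
      change ‖h x₀ + g x₀‖ ≤ _
      rw [hR, ← hαq]
      exact le_of_eq (by ring)
    | succ n ih => exact (hF n (s n) ih).1
  have hs : ∀ n, h (s (n + 1)) = - g (s n) := fun n => (hF n (s n) (hA n)).2.2
  have hsR : ∀ n, s n ∈ closedBall x₀ R := fun n => hball _ _ (hA n).1
  have hcau : CauchySeq s := cauchySeq_of_le_geometric q (R * (1 - q)) hq1 fun n => by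
    rw [dist_comm]; exact (hF n (s n) (hA n)).2.1
  obtain ⟨x, hx⟩ := cauchySeq_tendsto_of_complete hcau
  have hxR : x ∈ closedBall x₀ R :=
    isClosed_closedBall.mem_of_tendsto hx (Eventually.of_forall hsR)
  have hg : Tendsto (fun n => g (s n)) atTop (nhds (g x)) := by
    rw [tendsto_iff_norm_sub_tendsto_zero]
    refine squeeze_zero (fun _ => norm_nonneg _) (fun n => hlip _ (hsR n) x hxR) ?_
    simpa using (tendsto_iff_norm_sub_tendsto_zero.mp hx).const_mul ℓ
  have hpair : Tendsto (fun n => (s (n + 1), - g (s n))) atTop (nhds (x, - g x)) :=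
    ((tendsto_add_atTop_iff_nat 1).mpr hx).prodMk_nhds hg.neg
  have hmem := hcl.mem_of_tendsto hpair (Eventually.of_forall fun n =>
    ⟨(hs n).symm, subset_closure (hRU' (hsR (n + 1))),
      subset_closure (hηV' (by rw [← hs n]; simpa using (hA (n + 1)).2.2))⟩)
  refine ⟨x, hxR, ?_⟩
  have : - g x = h x := hmem.1
  rw [← this]; abel

/-- Implicit function theorem from covering (Theorem 4.3). -/
theorem implicit_function_from_covering {X Y P : Type*}
    [NormedAddCommGroup X] [CompleteSpace X]
    [NormedAddCommGroup Y] [TopologicalSpace P]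
    (f : X → P → Y) (x₀ : X) (p₀ : P)
    (hf0 : f x₀ p₀ = 0)
    -- f(·,p₀) is closed around (x₀, 0)
    (hclosed : ∃ U ∈ nhds x₀, ∃ V ∈ nhds (0 : Y),
      IsClosed {q : X × Y | q.2 = f q.1 p₀ ∧ q.1 ∈ closure U ∧ q.2 ∈ closure V})
    -- f(x₀,·) is continuous at p₀
    (hcont : ContinuousAt (fun p => f x₀ p) p₀)
    (ℓ α : ℝ) (hℓ : 0 ≤ ℓ) (hℓα : ℓ < α)
    -- the partial-difference Lipschitz estimate (5.1)
    (hlip : ∃ U ∈ nhds x₀, ∃ O ∈ nhds p₀, ∀ p ∈ O, ∀ x₁ ∈ U, ∀ x₂ ∈ U,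
      ‖(f x₁ p - f x₁ p₀) - (f x₂ p - f x₂ p₀)‖ ≤ ℓ * ‖x₁ - x₂‖)
    -- f(·,p₀) has the α-covering property around (x₀, 0) with α > ℓ
    (hcov : CoversAround α (fun x => {f x p₀}) x₀ (0 : Y)) :
    ∃ W ∈ nhds p₀, ∃ σ : P → X, ∀ p ∈ W,
      f (σ p) p = 0 ∧ ‖σ p - x₀‖ ≤ (α - ℓ)⁻¹ * ‖f x₀ p‖ := by
  obtain ⟨U', hU', V', hV', hcl⟩ := hclosed
  obtain ⟨U₂, hU₂, O, hO, hlip⟩ := hlip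
  obtain ⟨U, hU, V, hV, hc⟩ := hcov
  obtain ⟨δ, hδ, hδU⟩ := nhds_basis_closedBall.mem_iff.mp (inter_mem (inter_mem hU' hU₂) hU)
  obtain ⟨η, hη, hηV⟩ := nhds_basis_ball.mem_iff.mp (inter_mem hV' hV)
  have hpos : 0 < α - ℓ := sub_pos.mpr hℓα
  have hnorm : Tendsto (fun p => ‖f x₀ p‖) (nhds p₀) (nhds 0) := by
    simpa [hf0] using hcont.norm.tendsto
  have hsmall : ∀ᶠ p in nhds p₀, (α - ℓ)⁻¹ * ‖f x₀ p‖ < δ := by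
    have := hnorm.const_mul (α - ℓ)⁻¹
    rw [mul_zero] at this
    exact this.eventually_lt_const hδ
  have hsmall' : ∀ᶠ p in nhds p₀, ‖f x₀ p‖ + ℓ * ((α - ℓ)⁻¹ * ‖f x₀ p‖) < η := by
    have := hnorm.add ((hnorm.const_mul (α - ℓ)⁻¹).const_mul ℓ)
    simp only [mul_zero, add_zero] at this
    exact this.eventually_lt_const hη
  have key : ∀ᶠ p in nhds p₀, ∃ x, f x p = 0 ∧ ‖x - x₀‖ ≤ (α - ℓ)⁻¹ * ‖f x₀ p‖ := by
    filter_upwards [hsmall, hsmall', hO] with p h1 h2 hp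
    have hsub : closedBall x₀ ((α - ℓ)⁻¹ * ‖f x₀ p‖) ⊆ U' ∩ U₂ ∩ U :=
      (closedBall_subset_closedBall h1.le).trans hδU
    obtain ⟨x, hx, hx0⟩ := exists_zero_of_covering (h := fun x => f x p₀)
      (g := fun x => f x p - f x p₀) (R := (α - ℓ)⁻¹ * ‖f x₀ p‖) (η := η) hℓ hℓα
      (by rw [mul_inv_cancel_left₀ hpos.ne', add_sub_cancel])
      hc (fun x hx => (hsub hx).2) hcl (fun x hx => (hsub hx).1.1)
      (fun x₁ h₁ x₂ h₂ => hlip p hp x₁ (hsub h₁).1.2 x₂ (hsub h₂).1.2)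
      (fun y hy => (hηV hy).2) (fun y hy => (hηV hy).1)
      (by simpa [hf0] using hη) (by simpa [hf0] using h2)
    refine ⟨x, by simpa using hx0, ?_⟩
    rw [← dist_eq_norm]; exact hx
  have key' : ∀ p, ∃ x, (∃ x, f x p = 0 ∧ ‖x - x₀‖ ≤ (α - ℓ)⁻¹ * ‖f x₀ p‖) →
      f x p = 0 ∧ ‖x - x₀‖ ≤ (α - ℓ)⁻¹ * ‖f x₀ p‖ := by
    intro p
    by_cases hp : ∃ x, f x p = 0 ∧ ‖x - x₀‖ ≤ (α - ℓ)⁻¹ * ‖f x₀ p‖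
    · exact hp.imp fun x hx _ => hx
    · exact ⟨x₀, fun h => absurd h hp⟩
  choose σ hσ using key'
  exact ⟨_, key, σ, fun p hp => hσ p hp⟩
end

section
/- Let X be a Banach space, Y a normed space, P a topological space, F : X ⇉ Y, g : X × P → Y and φ : X × P → ℝ. Let x̄ be a solution of the problem: minimize φ(x, p̄) subject to g(x, p̄) ∈ F(x); that is, g(x̄, p̄) ∈ F(x̄) and φ(x̄, p̄) ≤ φ(x, p̄) for every x with g(x, p̄) ∈ F(x). Assume: φ is upper semicontinuous at (x̄, p̄); F is closed around (x̄, g(x̄, p̄)); there exist neighborhoods U of x̄ and O of p̄ and a number ℓ ≥ 0 such that g(·, p) is Lipschitz continuous on U with modulus ℓ for every p ∈ O, and g(x̄, ·) is continuous on O; and F has the α-covering property around (x̄, g(x̄, p̄)) for some α > ℓ. Then the optimal value function μ is upper semicontinuous at p̄: μ(p̄) = φ(x̄, p̄), and for every ε > 0 there exists a neighborhood W of p̄ such that μ(p) < μ(p̄) + ε for all p ∈ W. -/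
/-!
Upper semicontinuity reduces to solvability near `x₀`: if for every small `δ` and every `p` close to
`p₀` some `x` in `closedBall x₀ δ` satisfies `g x p ∈ F x`, then `μ p ≤ φ x p`, and the latter is
less than `φ x₀ p₀ + ε` by upper semicontinuity of `φ`.

Solvability is a Lyusternik–Graves type iteration (`exists_coincidence`). From `yₙ ∈ F xₙ` the
covering property yields `xₙ₊₁` with `yₙ₊₁ := g xₙ p ∈ F xₙ₊₁`, at a distance from `xₙ` controlled by
`‖g xₙ p - yₙ‖ / α`. As `g(·, p)` is `ℓ`-Lipschitz with `ℓ < α`, the steps shrink geometrically, so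
`xₙ` converges, and closedness of the graph of `F` passes `g xₙ p ∈ F xₙ₊₁` to the limit.
-/

open Metric Filter

/-- A coincidence point theorem: an `ℓ`-Lipschitz map `h` and an `α`-covering set-valued map `F` with
closed graph, `ℓ < α`, satisfy `h x ∈ F x` for some `x` in `closedBall x₀ δ`, provided `h x₀` is
close enough to a point `y₀ ∈ F x₀`. -/
theorem exists_coincidence {X Y : Type*}
    [NormedAddCommGroup X] [CompleteSpace X] [NormedAddCommGroup Y]
    {F : X → Set Y} {h : X → Y} {x₀ : X} {y₀ : Y} {ℓ α δ : ℝ} {U K : Set X} {V L : Set Y}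
    (hℓ : 0 ≤ ℓ) (hℓα : ℓ < α) (hδ : 0 < δ) (hy₀ : y₀ ∈ F x₀)
    (hlip : ∀ x₁ ∈ closedBall x₀ δ, ∀ x₂ ∈ closedBall x₀ δ, ‖h x₁ - h x₂‖ ≤ ℓ * ‖x₁ - x₂‖)
    (hcov : CoversOn α F U V) (hU : closedBall x₀ δ ⊆ U) (hV : closedBall y₀ (2 * α * δ) ⊆ V)
    (hclosed : IsClosed {q : X × Y | q.2 ∈ F q.1 ∧ q.1 ∈ K ∧ q.2 ∈ L})
    (hK : closedBall x₀ δ ⊆ K) (hL : closedBall y₀ (2 * α * δ) ⊆ L)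
    (hstart : ‖h x₀ - y₀‖ ≤ (α - ℓ) / 2 * δ) :
    ∃ x ∈ closedBall x₀ δ, h x ∈ F x := by
  have hα : 0 < α := hℓ.trans_lt hℓα
  -- The ratio `q` is the mean of `ℓ / α` and `1`, hence positive even when `ℓ = 0`.
  obtain ⟨q, hq⟩ : ∃ q : ℝ, α * q = (ℓ + α) / 2 := ⟨(ℓ + α) / 2 / α, by field_simp⟩
  have hq0 : 0 < q := by
    by_contra hc
    nlinarith [mul_nonneg hα.le (sub_nonneg.2 (not_lt.1 hc))]
  have hq1 : q < 1 := by
    by_contra hc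
    nlinarith [mul_nonneg hα.le (sub_nonneg.2 (not_lt.1 hc))]
  have hℓq : ℓ ≤ α * q := by linarith
  let I : ℕ → X × Y → Prop := fun n z =>
    z.2 ∈ F z.1 ∧ dist z.1 x₀ ≤ δ * (1 - q ^ n) ∧ dist z.2 y₀ ≤ 2 * α * δ ∧
      ‖h z.1 - z.2‖ ≤ α * ((1 - q) * δ * q ^ n)
  have ball_of : ∀ {n : ℕ} {x : X}, dist x x₀ ≤ δ * (1 - q ^ n) → x ∈ closedBall x₀ δ := by
    intro n x hx
    rw [mem_closedBall]
    nlinarith [mul_pos hδ (pow_pos hq0 n)]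
  have step : ∀ (n : ℕ) (z : X × Y), ∃ z' : X × Y, I n z →
      I (n + 1) z' ∧ z'.2 = h z.1 ∧ dist z.1 z'.1 ≤ (1 - q) * δ * q ^ n := by
    intro n z
    by_cases hz : I n z
    swap
    · exact ⟨z, fun h => absurd h hz⟩
    obtain ⟨hF, hd, hy, hr⟩ := hz
    have hqn : 0 < q ^ n := pow_pos hq0 n
    have hrpos : 0 < (1 - q) * δ * q ^ n := mul_pos (mul_pos (sub_pos.2 hq1) hδ) hqn
    have hsub : closedBall z.1 ((1 - q) * δ * q ^ n) ⊆ U := by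
      refine (closedBall_subset_closedBall' ?_).trans hU
      nlinarith [mul_pos hδ (mul_pos hq0 hqn)]
    obtain ⟨u, hu, huF⟩ := hcov z.1 _ hrpos hsub z.2 ⟨hF, hV hy⟩ (h z.1 - z.2) hr
    rw [add_sub_cancel] at huF
    rw [mem_closedBall] at hu
    have hux : dist u x₀ ≤ δ * (1 - q ^ (n + 1)) := by
      calc dist u x₀ ≤ dist u z.1 + dist z.1 x₀ := dist_triangle _ _ _
        _ ≤ (1 - q) * δ * q ^ n + δ * (1 - q ^ n) := add_le_add hu hd
        _ = δ * (1 - q ^ (n + 1)) := by ring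
    have hzB := ball_of hd
    refine ⟨(u, h z.1), fun _ => ⟨⟨huF, hux, ?_, ?_⟩, rfl, by rwa [dist_comm]⟩⟩
    · have h1 := hlip z.1 hzB x₀ (mem_closedBall_self hδ.le)
      rw [← dist_eq_norm, ← dist_eq_norm] at h1
      rw [← dist_eq_norm] at hstart
      have h2 := mul_le_mul_of_nonneg_left (mem_closedBall.1 hzB) hℓ
      have h3 := dist_triangle (h z.1) (h x₀) y₀
      change dist (h z.1) y₀ ≤ _
      nlinarith [mul_pos hδ (sub_pos.2 hℓα), mul_pos hδ hα]
    · have h1 := hlip u (ball_of hux) z.1 hzB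
      rw [← dist_eq_norm u] at h1
      calc ‖h u - h z.1‖ ≤ ℓ * dist u z.1 := h1
        _ ≤ (α * q) * ((1 - q) * δ * q ^ n) :=
          mul_le_mul hℓq hu dist_nonneg (mul_pos hα hq0).le
        _ = α * ((1 - q) * δ * q ^ (n + 1)) := by ring
  choose f hf using step
  let s : ℕ → X × Y := fun n => Nat.rec (x₀, y₀) f n
  have hI : ∀ n, I n (s n) := by
    intro n
    induction n with
    | zero =>
      refine ⟨hy₀, by simp [s], (dist_self y₀).trans_le (by positivity), ?_⟩
      change ‖h x₀ - y₀‖ ≤ _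
      refine hstart.trans (le_of_eq ?_)
      rw [pow_zero]
      linear_combination δ * hq
    | succ n ih => exact (hf n (s n) ih).1
  have hB : ∀ n, (s n).1 ∈ closedBall x₀ δ := fun n => ball_of (hI n).2.1
  obtain ⟨x, hx⟩ := cauchySeq_tendsto_of_complete
    (cauchySeq_of_le_geometric q ((1 - q) * δ) hq1 fun n => (hf n (s n) (hI n)).2.2)
  have hxB : x ∈ closedBall x₀ δ :=
    isClosed_closedBall.mem_of_tendsto hx (Eventually.of_forall hB)
  have hhx : Tendsto (fun n => h (s n).1) atTop (nhds (h x)) := by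
    rw [tendsto_iff_norm_sub_tendsto_zero] at hx ⊢
    refine squeeze_zero (fun _ => norm_nonneg _) (fun n => hlip _ (hB n) _ hxB) ?_
    simpa using hx.const_mul ℓ
  have hlim : Tendsto (fun n => ((s (n + 1)).1, h (s n).1)) atTop (nhds (x, h x)) :=
    ((tendsto_add_atTop_iff_nat 1).2 hx).prodMk_nhds hhx
  refine ⟨x, hxB, (hclosed.mem_of_tendsto hlim (Eventually.of_forall fun n => ?_)).1⟩
  have e : (s (n + 1)).2 = h (s n).1 := (hf n (s n) (hI n)).2.1
  rw [← e]
  exact ⟨(hI (n + 1)).1, hK (hB (n + 1)), hL (hI (n + 1)).2.2.1⟩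

/-- Upper semicontinuity of the optimal value function
`μ(p) = inf{φ(x,p) : g(x,p) ∈ F(x)}` (Theorem 5.1, first part). -/
theorem optimal_value_upperSemicontinuous {X Y P : Type*}
    [NormedAddCommGroup X] [CompleteSpace X]
    [NormedAddCommGroup Y] [TopologicalSpace P]
    (F : X → Set Y) (g : X → P → Y) (φ : X → P → ℝ) (x₀ : X) (p₀ : P)
    (S : P → Set X) (hSdef : S = fun p => {x : X | g x p ∈ F x})
    (μ : P → EReal) (hμdef : μ = fun p => ⨅ x ∈ S p, ((φ x p : ℝ) : EReal))
    -- x₀ solves the problem at p = p₀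
    (hfeas : x₀ ∈ S p₀)
    (hmin : ∀ x ∈ S p₀, φ x₀ p₀ ≤ φ x p₀)
    -- φ is upper semicontinuous at (x₀, p₀)
    (husc : UpperSemicontinuousAt (fun q : X × P => φ q.1 q.2) (x₀, p₀))
    -- F is closed around (x₀, g(x₀,p₀))
    (hclosed : ClosedAround F x₀ (g x₀ p₀))
    (ℓ α : ℝ) (hℓ : 0 ≤ ℓ) (hℓα : ℓ < α)
    -- g(·,p) uniformly Lipschitz with modulus ℓ, g(x₀,·) continuous
    (hg : ∃ U ∈ nhds x₀, ∃ O ∈ nhds p₀,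
      (∀ p ∈ O, ∀ x₁ ∈ U, ∀ x₂ ∈ U, ‖g x₁ p - g x₂ p‖ ≤ ℓ * ‖x₁ - x₂‖) ∧
      ContinuousOn (fun p => g x₀ p) O)
    -- F has the α-covering property around (x₀, g(x₀,p₀)) with α > ℓ
    (hcov : CoversAround α F x₀ (g x₀ p₀)) :
    μ p₀ = ((φ x₀ p₀ : ℝ) : EReal) ∧
    ∀ ε : ℝ, 0 < ε → ∃ W ∈ nhds p₀, ∀ p ∈ W, μ p < μ p₀ + (ε : EReal) := by
  subst hSdef hμdef
  have hμ₀ : (⨅ x ∈ {x : X | g x p₀ ∈ F x}, ((φ x p₀ : ℝ) : EReal)) = (φ x₀ p₀ : ℝ) :=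
    le_antisymm (iInf₂_le x₀ hfeas) (le_iInf₂ fun x hx => EReal.coe_le_coe_iff.2 (hmin x hx))
  refine ⟨hμ₀, fun ε hε => ?_⟩
  obtain ⟨U₁, hU₁, O, hO, hlip, hcont⟩ := hg
  obtain ⟨U₂, hU₂, V₂, hV₂, hcl⟩ := hclosed
  obtain ⟨U₃, hU₃, V₃, hV₃, hcv⟩ := hcov
  have hα : 0 < α := hℓ.trans_lt hℓα
  have hφ := husc (φ x₀ p₀ + ε) (lt_add_of_pos_right _ hε)
  rw [nhds_prod_eq, eventually_prod_iff] at hφ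
  obtain ⟨A, hA, B, hB, hAB⟩ := hφ
  obtain ⟨δ₁, hδ₁, hδU⟩ := nhds_basis_closedBall.mem_iff.1
    (inter_mem (inter_mem hU₁ hU₂) (inter_mem hU₃ hA))
  obtain ⟨δ₂, hδ₂, hδV⟩ := nhds_basis_closedBall.mem_iff.1 (inter_mem hV₂ hV₃)
  let δ := min δ₁ (δ₂ / (2 * α))
  have hδ : 0 < δ := lt_min hδ₁ (by positivity)
  have hδX : closedBall x₀ δ ⊆ (U₁ ∩ U₂) ∩ (U₃ ∩ {x | A x}) :=
    (closedBall_subset_closedBall (min_le_left _ _)).trans hδU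
  have hδY : closedBall (g x₀ p₀) (2 * α * δ) ⊆ V₂ ∩ V₃ := by
    refine (closedBall_subset_closedBall ?_).trans hδV
    rw [mul_comm]
    exact (le_div_iff₀ (by positivity)).1 (min_le_right _ _)
  have hnear : ∀ᶠ p in nhds p₀, dist (g x₀ p) (g x₀ p₀) ≤ (α - ℓ) / 2 * δ :=
    (hcont.continuousAt hO).eventually
      (closedBall_mem_nhds _ (mul_pos (half_pos (sub_pos.2 hℓα)) hδ))
  refine ⟨_, inter_mem (inter_mem hO hB) hnear, ?_⟩
  rintro p ⟨⟨hpO, hpB⟩, hp⟩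
  obtain ⟨x, hx, hxF⟩ := exists_coincidence (h := fun x => g x p) hℓ hℓα hδ hfeas
    (fun x₁ h₁ x₂ h₂ => hlip p hpO x₁ (hδX h₁).1.1 x₂ (hδX h₂).1.1) hcv
    (fun x hx => (hδX hx).2.1) (fun y hy => (hδY hy).2) hcl
    (fun x hx => subset_closure (hδX hx).1.2) (fun y hy => subset_closure (hδY hy).1)
    (by rw [← dist_eq_norm]; exact hp)
  beta_reduce
  rw [hμ₀]
  refine (iInf₂_le x hxF).trans_lt ?_
  rw [← EReal.coe_add]
  exact EReal.coe_lt_coe_iff.2 (hAB (hδX hx).2.2 hpB)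
end

section
/- Let X be a Banach space, Y a normed space, P a metric space with metric ρ, F : X ⇉ Y, g : X × P → Y and φ : X × P → ℝ. Let x̄ be a solution of the problem: minimize φ(x, p̄) subject to g(x, p̄) ∈ F(x). Assume: F is closed around (x̄, g(x̄, p̄)); there exist neighborhoods U of x̄ and O of p̄ and a number ℓ ≥ 0 such that g(·, p) is Lipschitz continuous on U with modulus ℓ for every p ∈ O; F has the α-covering property around (x̄, g(x̄, p̄)) for some α > ℓ; φ is calm at (x̄, p̄), i.e., there are κ₁ ≥ 0 and δ > 0 such that |φ(x, p) − φ(x̄, p̄)| ≤ κ₁(‖x − x̄‖ + ρ(p, p̄)) whenever ‖x − x̄‖ ≤ δ and ρ(p, p̄) ≤ δ; and g(x̄, ·) is calm at p̄, i.e., there is κ₂ ≥ 0 with ‖g(x̄, p) − g(x̄, p̄)‖ ≤ κ₂ ρ(p, p̄) for all p near p̄. Then the optimal value function μ is calm from above at p̄: there exist κ > 0 and a neighborhood W of p̄ such that μ(p) ≤ μ(p̄) + κ ρ(p, p̄) for all p ∈ W. -/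
/-!
The proof is a Lyusternik–Graves iteration. For `p` near `p₀`, start at `x₀` with
`g(x₀, p₀) ∈ F(x₀)` and use covering repeatedly to choose `xₙ₊₁` near `xₙ` with
`g(xₙ, p) ∈ F(xₙ₊₁)`. Since `g(·, p)` is Lipschitz with a modulus `ℓ < α`, the steps shrink
geometrically; completeness of `X` gives a limit `x`, and closedness of the graph of `F` gives
`g(x, p) ∈ F(x)`. This is `exists_coincidence_of_coversOn`, which also bounds
`‖x - x₀‖` by a multiple of the initial defect, hence (calmness of `g(x₀, ·)`)
by a multiple of `dist p p₀`. Calmness of `φ` then bounds `μ(p) ≤ φ(x, p)` from above.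
-/

open Metric Filter

/-- Coincidence points of a covering set-valued map `F` and a map `h` of smaller Lipschitz modulus
`α * c`, `c < 1`: if the defect `‖h x₀ - y₀‖` with `y₀ ∈ F x₀` is at most `α * (s * (1 - c))`, then
`h x ∈ F x` for some `x` within distance `s` of `x₀`. All hypotheses are local: they concern only the
balls of radius `a` around `x₀` and `b` around `y₀`, which the iterates do not leave. -/
theorem exists_coincidence_of_coversOn {X Y : Type*} [NormedAddCommGroup X] [CompleteSpace X]
    [NormedAddCommGroup Y] {F : X → Set Y} {h : X → Y} {x₀ : X} {y₀ : Y} {α c a b s : ℝ}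
    (hα : 0 < α) (hc0 : 0 < c) (hc1 : c < 1) (hs : 0 < s) (hsa : s ≤ a) (hsb : α * s ≤ b)
    (hcov : CoversOn α F (closedBall x₀ a) (closedBall y₀ b))
    (hcl : IsClosed {q : X × Y | q.2 ∈ F q.1 ∧ q.1 ∈ closedBall x₀ a ∧ q.2 ∈ closedBall y₀ b})
    (hh : ∀ x₁ ∈ closedBall x₀ a, ∀ x₂ ∈ closedBall x₀ a, ‖h x₁ - h x₂‖ ≤ α * c * ‖x₁ - x₂‖)
    (hy : y₀ ∈ F x₀) (hd : ‖h x₀ - y₀‖ ≤ α * (s * (1 - c))) :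
    ∃ x, dist x x₀ ≤ s ∧ h x ∈ F x := by
  -- `Inv n (x, y)`: the state after `n` steps, where `y` is the value of `h` at the previous point
  -- (and `y = y₀` for `n = 0`); the point moved at most `s * (1 - c) * c ^ k` in step `k`
  let Inv : ℕ → X × Y → Prop := fun n q =>
    q.2 ∈ F q.1 ∧ ‖h q.1 - q.2‖ ≤ α * (s * (1 - c) * c ^ n) ∧
      dist q.1 x₀ ≤ s * (1 - c ^ n) ∧ dist q.2 y₀ ≤ b
  have hsa' : ∀ n : ℕ, s * (1 - c ^ n) ≤ a := fun n => by
    have : 0 < s * c ^ n := by positivity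
    linarith
  have hstep : ∀ (n : ℕ) (q : X × Y), ∃ q' : X × Y, Inv n q →
      Inv (n + 1) q' ∧ dist q.1 q'.1 ≤ s * (1 - c) * c ^ n ∧ q'.2 = h q.1 := by
    rintro n ⟨x, y⟩
    by_cases hI : Inv n (x, y)
    swap
    · exact ⟨(x, y), fun h => absurd h hI⟩
    obtain ⟨h1, h2, h3, h4⟩ := hI
    dsimp only at h1 h2 h3 h4
    have hr : 0 < s * (1 - c) * c ^ n := by
      have : 0 < 1 - c := by linarith
      positivity
    have hsum : s * (1 - c ^ n) + s * (1 - c) * c ^ n = s * (1 - c ^ (n + 1)) := by ring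
    have hx : x ∈ closedBall x₀ a := mem_closedBall.2 (h3.trans (hsa' n))
    have hx₀ : x₀ ∈ closedBall x₀ a := mem_closedBall_self (hs.le.trans hsa)
    have hsub : closedBall x (s * (1 - c) * c ^ n) ⊆ closedBall x₀ a := by
      apply closedBall_subset_closedBall'
      have := hsa' (n + 1)
      linarith
    obtain ⟨u, hu, huF⟩ := hcov x _ hr hsub y ⟨h1, h4⟩ (h x - y) h2
    rw [add_sub_cancel] at huF
    refine ⟨(u, h x), fun _ => ⟨⟨huF, ?_, ?_, ?_⟩, ?_, rfl⟩⟩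
    · have e1 := hh u (hsub hu) x hx
      rw [← dist_eq_norm u x] at e1
      calc ‖h u - h x‖ ≤ α * c * dist u x := e1
        _ ≤ α * c * (s * (1 - c) * c ^ n) := by
          have := mem_closedBall.1 hu
          gcongr
        _ = _ := by ring
    · have := dist_triangle u x x₀
      have := mem_closedBall.1 hu
      dsimp only
      linarith
    · have e1 := hh x hx x₀ hx₀
      rw [← dist_eq_norm x x₀] at e1
      have e2 : dist x x₀ ≤ s := by
        have : 0 < s * c ^ n := by positivity
        linarith
      have e3 : α * c * dist x x₀ ≤ α * c * s := by gcongr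
      have e4 := dist_triangle (h x) (h x₀) y₀
      rw [dist_eq_norm (h x) (h x₀), dist_eq_norm (h x₀) y₀] at e4
      dsimp only
      nlinarith
    · rw [dist_comm]
      exact mem_closedBall.1 hu
  choose f hf using hstep
  let w : ℕ → X × Y := fun n => Nat.rec (x₀, y₀) (fun n q => f n q) n
  have hw : ∀ n, Inv n (w n) := by
    intro n
    induction n with
    | zero =>
      refine ⟨hy, by simpa [w] using hd, by simp [w], ?_⟩
      have : 0 < α * s := by positivity
      simpa [w] using this.le.trans hsb
    | succ n ih => exact (hf n (w n) ih).1
  have hdist : ∀ n, dist (w n).1 (w (n + 1)).1 ≤ s * (1 - c) * c ^ n :=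
    fun n => (hf n (w n) (hw n)).2.1
  have hval : ∀ n, (w (n + 1)).2 = h (w n).1 := fun n => (hf n (w n) (hw n)).2.2
  obtain ⟨x, hx⟩ := cauchySeq_tendsto_of_complete
    (cauchySeq_of_le_geometric (f := fun n => (w n).1) c (s * (1 - c)) hc1 hdist)
  have hmem : ∀ n, (w n).1 ∈ closedBall x₀ s := fun n => by
    have : 0 < s * c ^ n := by positivity
    have := (hw n).2.2.1
    rw [mem_closedBall]
    linarith
  have hxs : x ∈ closedBall x₀ s :=
    isClosed_closedBall.mem_of_tendsto hx (Eventually.of_forall hmem)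
  have hsubs : closedBall x₀ s ⊆ closedBall x₀ a := closedBall_subset_closedBall hsa
  have hlip : LipschitzOnWith (α * c).toNNReal h (closedBall x₀ a) := by
    refine LipschitzOnWith.of_dist_le_mul fun u hu v hv => ?_
    rw [Real.coe_toNNReal _ (by positivity), dist_eq_norm, dist_eq_norm]
    exact hh u hu v hv
  have hhx : Tendsto (fun n => h (w n).1) atTop (nhds (h x)) :=
    (hlip.continuousOn x (hsubs hxs)).tendsto.comp
      (tendsto_nhdsWithin_iff.2 ⟨hx, Eventually.of_forall fun n => hsubs (hmem n)⟩)
  have hpair : Tendsto (fun n => ((w (n + 1)).1, h (w n).1)) atTop (nhds (x, h x)) :=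
    (hx.comp (tendsto_add_atTop_nat 1)).prodMk_nhds hhx
  have hlim := hcl.mem_of_tendsto hpair (Eventually.of_forall fun n => by
    have := hw (n + 1)
    refine ⟨?_, hsubs (hmem (n + 1)), ?_⟩
    · have h1 := this.1
      rwa [hval n] at h1
    · have h1 := this.2.2.2
      rwa [hval n] at h1)
  exact ⟨x, mem_closedBall.1 hxs, hlim.1⟩

/-- Calmness from above of the optimal value function
`μ(p) = inf{φ(x,p) : g(x,p) ∈ F(x)}` (Theorem 5.1, second part). -/
theorem optimal_value_calm_from_above {X Y P : Type*}
    [NormedAddCommGroup X] [CompleteSpace X]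
    [NormedAddCommGroup Y] [MetricSpace P]
    (F : X → Set Y) (g : X → P → Y) (φ : X → P → ℝ) (x₀ : X) (p₀ : P)
    (S : P → Set X) (hSdef : S = fun p => {x : X | g x p ∈ F x})
    (μ : P → EReal) (hμdef : μ = fun p => ⨅ x ∈ S p, ((φ x p : ℝ) : EReal))
    -- x₀ solves the problem at p = p₀
    (hfeas : x₀ ∈ S p₀)
    (hmin : ∀ x ∈ S p₀, φ x₀ p₀ ≤ φ x p₀)
    -- F is closed around (x₀, g(x₀,p₀))
    (hclosed : ClosedAround F x₀ (g x₀ p₀))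
    (ℓ α : ℝ) (hℓ : 0 ≤ ℓ) (hℓα : ℓ < α)
    -- g(·,p) uniformly Lipschitz with modulus ℓ
    (hg : ∃ U ∈ nhds x₀, ∃ O ∈ nhds p₀,
      ∀ p ∈ O, ∀ x₁ ∈ U, ∀ x₂ ∈ U, ‖g x₁ p - g x₂ p‖ ≤ ℓ * ‖x₁ - x₂‖)
    -- F has the α-covering property around (x₀, g(x₀,p₀)) with α > ℓ
    (hcov : CoversAround α F x₀ (g x₀ p₀))
    -- φ is calm at (x₀, p₀)
    (hφcalm : ∃ κ₁ : ℝ, 0 ≤ κ₁ ∧ ∃ δ > (0:ℝ), ∀ x : X, ∀ p : P,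
      ‖x - x₀‖ ≤ δ → dist p p₀ ≤ δ →
      |φ x p - φ x₀ p₀| ≤ κ₁ * (‖x - x₀‖ + dist p p₀))
    -- g(x₀,·) is calm at p₀
    (hgcalm : ∃ κ₂ : ℝ, 0 ≤ κ₂ ∧ ∃ O ∈ nhds p₀, ∀ p ∈ O,
      ‖g x₀ p - g x₀ p₀‖ ≤ κ₂ * dist p p₀) :
    ∃ κ > (0:ℝ), ∃ W ∈ nhds p₀, ∀ p ∈ W,
      μ p ≤ μ p₀ + ((κ * dist p p₀ : ℝ) : EReal) := by
  subst hSdef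
  subst hμdef
  obtain ⟨U₁, hU₁, V₁, hV₁, hcl⟩ := hclosed
  obtain ⟨U₂, hU₂, O₂, hO₂, hlip⟩ := hg
  obtain ⟨U₃, hU₃, V₃, hV₃, hcov⟩ := hcov
  obtain ⟨κ₁, hκ₁, δ, hδ, hφ⟩ := hφcalm
  obtain ⟨κ₂, hκ₂, O₄, hO₄, hcalm⟩ := hgcalm
  obtain ⟨a, ha, hasub⟩ := nhds_basis_closedBall.mem_iff.1 (inter_mem hU₁ (inter_mem hU₂ hU₃))
  obtain ⟨b, hb, hbsub⟩ := nhds_basis_closedBall.mem_iff.1 (inter_mem hV₁ hV₃)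
  have hα : 0 < α := by linarith
  -- `α * c` is the midpoint of `ℓ` and `α`, so `c > 0` even when `ℓ = 0`
  obtain ⟨c, hc⟩ : ∃ c, c = (ℓ + α) / (2 * α) := ⟨_, rfl⟩
  have hαc : α * c = (ℓ + α) / 2 := by rw [hc]; field_simp
  have hc0 : 0 < c := by rw [hc]; positivity
  have hc1 : c < 1 := by rw [hc, div_lt_one (by positivity)]; linarith
  have hc1' : 0 < 1 - c := by linarith
  -- `K` makes `α * (K * d * (1 - c)) = (κ₂ + 1) * d`, which dominates the initial defect
  obtain ⟨K, hK⟩ : ∃ K, K = (κ₂ + 1) / (α * (1 - c)) := ⟨_, rfl⟩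
  have hKpos : 0 < K := by rw [hK]; positivity
  have hKeq : α * (K * (1 - c)) = κ₂ + 1 := by rw [hK]; field_simp
  have hcov' : CoversOn α F (closedBall x₀ a) (closedBall (g x₀ p₀) b) :=
    fun x r hr hx y hy z hz =>
      hcov x r hr (hx.trans fun u hu => (hasub hu).2.2) y ⟨hy.1, (hbsub hy.2).2⟩ z hz
  have hcl' : IsClosed {q : X × Y | q.2 ∈ F q.1 ∧ q.1 ∈ closedBall x₀ a ∧
      q.2 ∈ closedBall (g x₀ p₀) b} := by
    have hE := hcl.inter ((isClosed_closedBall (x := x₀) (ε := a)).prod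
      (isClosed_closedBall (x := g x₀ p₀) (ε := b)))
    convert hE using 1
    ext q
    constructor
    · rintro ⟨h1, h2, h3⟩
      exact ⟨⟨h1, subset_closure (hasub h2).1, subset_closure (hbsub h3).1⟩, h2, h3⟩
    · rintro ⟨⟨h1, -, -⟩, h2, h3⟩
      exact ⟨h1, h2, h3⟩
  have hμ₀ : ((φ x₀ p₀ : ℝ) : EReal) ≤ ⨅ x ∈ {x : X | g x p₀ ∈ F x}, ((φ x p₀ : ℝ) : EReal) :=
    le_iInf₂ fun x hx => EReal.coe_le_coe_iff.2 (hmin x hx)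
  have hsmall : ∀ M : ℝ, ∀ e > 0, ∀ᶠ p in nhds p₀, M * dist p p₀ ≤ e := by
    intro M e he
    have hcont : Continuous fun p => M * dist p p₀ := by fun_prop
    have ht := hcont.tendsto p₀
    simp only [dist_self, mul_zero] at ht
    exact ht.eventually (ge_mem_nhds he)
  refine ⟨κ₁ * (K + 1) + 1, by positivity, _, inter_mem hO₂ (inter_mem hO₄
    (inter_mem (hsmall K a ha) (inter_mem (hsmall (α * K) b hb)
      (inter_mem (hsmall K δ hδ) (hsmall 1 δ hδ))))), ?_⟩
  rintro p ⟨hp2, hp4, hpa, hpb, hpK, hpδ⟩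
  simp only [Set.mem_ofPred_eq, one_mul] at hpa hpb hpK hpδ
  have hd0 : 0 ≤ dist p p₀ := dist_nonneg
  obtain ⟨x, hxd, hxF⟩ : ∃ x, dist x x₀ ≤ K * dist p p₀ ∧ g x p ∈ F x := by
    rcases hd0.eq_or_lt with h0 | h0
    · -- the iteration needs a positive radius; at `p = p₀` the point `x₀` itself is feasible
      obtain rfl : p = p₀ := dist_eq_zero.1 h0.symm
      exact ⟨x₀, by simp, hfeas⟩
    · refine exists_coincidence_of_coversOn (h := fun x => g x p) hα hc0 hc1 (by positivity) hpa
        (by linarith) hcov' hcl' (fun x₁ h₁ x₂ h₂ => ?_) hfeas ?_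
      · refine (hlip p hp2 x₁ (hasub h₁).2.1 x₂ (hasub h₂).2.1).trans ?_
        gcongr
        linarith
      · refine (hcalm p hp4).trans ?_
        have : α * (K * dist p p₀ * (1 - c)) = (κ₂ + 1) * dist p p₀ := by
          rw [← hKeq]; ring
        rw [this]
        linarith
  have hφx : φ x p ≤ φ x₀ p₀ + (κ₁ * (K + 1) + 1) * dist p p₀ := by
    rw [dist_eq_norm] at hxd
    have h1 := (le_abs_self _).trans (hφ x p (hxd.trans hpK) hpδ)
    have h2 : κ₁ * (‖x - x₀‖ + dist p p₀) ≤ κ₁ * (K * dist p p₀ + dist p p₀) := by gcongr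
    linarith
  calc (⨅ x ∈ {x : X | g x p ∈ F x}, ((φ x p : ℝ) : EReal)) ≤ ((φ x p : ℝ) : EReal) :=
        iInf₂_le x hxF
    _ ≤ ((φ x₀ p₀ + (κ₁ * (K + 1) + 1) * dist p p₀ : ℝ) : EReal) := EReal.coe_le_coe_iff.2 hφx
    _ = ((φ x₀ p₀ : ℝ) : EReal) + (((κ₁ * (K + 1) + 1) * dist p p₀ : ℝ) : EReal) :=
        EReal.coe_add _ _
    _ ≤ _ := by gcongr
end

section
/- Let X be a Banach space, Y a normed space, P a topological space, F : X ⇉ Y a set-valued mapping with closed graph, g : X × P → Y, φ : X × P → ℝ, and suppose S(p̄) ≠ ∅. Assume there exist numbers α > ℓ ≥ 0 and δ > 0 and a neighborhood O of p̄ such that: (i) for every p ∈ O and every u ∈ S(p), F has the α-covering property on the closed ball B_X(u, δ) relative to the closed ball B_Y(g(u, p̄), α δ); (ii) for every p ∈ O and u ∈ S(p), the mapping g(·, p̄) is Lipschitz continuous on B_X(u, δ) with modulus ℓ; (iii) g(x, ·) is continuous at p̄ uniformly in x ∈ X, i.e., for every ε > 0 there is a neighborhood W of p̄ with ‖g(x,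 p) − g(x, p̄)‖ ≤ ε for all x ∈ X and p ∈ W; (iv) φ is uniformly lower semicontinuous at the points (x, p̄) with x ∈ S(p̄), i.e., for every ε > 0 there are ν > 0 and a neighborhood O′ of p̄ such that φ(u, p) > φ(x, p̄) − ε for all x ∈ S(p̄), p ∈ O′ and u ∈ X with ‖u − x‖ ≤ ν. Then the optimal value function μ is lower semicontinuous at p̄: for every ε > 0 there is a neighborhood W of p̄ such that μ(p) ≥ μ(p̄) − ε for all p ∈ W. -/
/-!
Let `p` be close to `p₀` and `u ∈ S p`. Then `g u p ∈ F u` is close to `g u p₀`, so `u` is an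
approximate solution of `g x p₀ ∈ F x`. Since `F` covers at a rate `α` larger than the Lipschitz
modulus `ℓ` of `g(·, p₀)`, a Lyusternik–Graves iteration (`exists_solution_near`) turns `u` into an
exact solution `x ∈ S p₀` at a distance from `u` that is bounded by a constant times the residual
`‖g u p - g u p₀‖`. By uniform continuity of `g(x, ·)` this distance is as small as desired,
uniformly in `u`, and the uniform lower semicontinuity of `φ` gives
`μ p₀ - ε ≤ φ x p₀ - ε ≤ φ u p`; it remains to take the infimum over `u ∈ S p`.
-/

open Metric Filter

/-- Lyusternik–Graves iteration: starting from `x₀ = u` and `y₀ ∈ F u`, covering yields `xₙ₊₁` with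
`h xₙ ∈ F xₙ₊₁` and `‖xₙ₊₁ - xₙ‖ ≤ R (1 - q) qⁿ`. The sequence stays in the ball of radius `R`
around `u`, and its limit solves `h x ∈ F x` because the graph of `F` is closed. -/
lemma exists_solution_near {X Y : Type*}
    [NormedAddCommGroup X] [CompleteSpace X] [NormedAddCommGroup Y]
    {F : X → Set Y} {h : X → Y} (hF : IsClosed {z : X × Y | z.2 ∈ F z.1})
    {α q δ R : ℝ} (hα : 0 < α) (hq : 0 < q) (hq1 : q < 1) (hR : 0 < R) (hRδ : R ≤ δ)
    {u : X} {y₀ : Y}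
    (hcov : CoversOn α F (closedBall u δ) (closedBall (h u) (α * δ)))
    (hlip : ∀ x₁ ∈ closedBall u δ, ∀ x₂ ∈ closedBall u δ,
      ‖h x₁ - h x₂‖ ≤ α * q * ‖x₁ - x₂‖)
    (hy₀ : y₀ ∈ F u) (hres : ‖y₀ - h u‖ ≤ α * (R * (1 - q))) :
    ∃ x, ‖x - u‖ ≤ R ∧ h x ∈ F x := by
  -- The invariant of the `n`-th iterate `(xₙ, yₙ)`; `R (1 - qⁿ)` is the sum of the first `n` steps.
  let Inv : ℕ → X × Y → Prop := fun n z =>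
    z.2 ∈ F z.1 ∧ ‖z.2 - h z.1‖ ≤ α * (R * (1 - q) * q ^ n) ∧ ‖z.2 - h u‖ ≤ α * δ ∧
      ‖z.1 - u‖ ≤ R * (1 - q ^ n)
  have hδ : 0 < δ := hR.trans_le hRδ
  have hu : u ∈ closedBall u δ := mem_closedBall_self hδ.le
  have hball : ∀ n z, Inv n z → z.1 ∈ closedBall u δ := by
    rintro n z ⟨-, -, -, hz⟩
    rw [mem_closedBall, dist_eq_norm]
    have := mul_pos hR (pow_pos hq n)
    linarith
  have step : ∀ n z, Inv n z → ∃ z', Inv (n + 1) z' ∧ z'.2 = h z.1 ∧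
      ‖z'.1 - z.1‖ ≤ R * (1 - q) * q ^ n := by
    intro n z hz
    have hzb := hball n z hz
    obtain ⟨h1, h2, h3, h4⟩ := hz
    have hqn := pow_pos hq n
    have hr : 0 < R * (1 - q) * q ^ n := by
      have : 0 < 1 - q := by linarith
      positivity
    have hR2 : 0 < R * q ^ (n + 1) := by positivity
    have hsum : R * (1 - q ^ n) + R * (1 - q) * q ^ n = R * (1 - q ^ (n + 1)) := by ring
    have hsub : closedBall z.1 (R * (1 - q) * q ^ n) ⊆ closedBall u δ := by
      apply closedBall_subset_closedBall'
      rw [dist_eq_norm]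
      linarith
    obtain ⟨x, hx, hxF⟩ := hcov z.1 _ hr hsub z.2 ⟨h1, by rwa [mem_closedBall, dist_eq_norm]⟩
      (h z.1 - z.2) (by rwa [norm_sub_rev])
    have hxb := hsub hx
    rw [mem_closedBall, dist_eq_norm] at hx
    refine ⟨(x, h z.1), ⟨by simpa using hxF, ?_, ?_, ?_⟩, rfl, hx⟩
    · calc ‖h z.1 - h x‖ ≤ α * q * ‖z.1 - x‖ := hlip _ hzb _ hxb
        _ ≤ α * q * (R * (1 - q) * q ^ n) := by
            rw [norm_sub_rev]
            gcongr
        _ = _ := by ring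
    · have hzb' := hzb
      rw [mem_closedBall, dist_eq_norm] at hzb'
      calc ‖h z.1 - h u‖ ≤ α * q * ‖z.1 - u‖ := hlip _ hzb _ hu
        _ ≤ α * 1 * δ := by gcongr
        _ = _ := by ring
    · have := norm_sub_le_norm_sub_add_norm_sub x z.1 u
      linarith
  choose f hf using step
  have h0 : Inv 0 (u, y₀) := by
    refine ⟨hy₀, by simpa using hres, hres.trans ?_, by simp⟩
    have := mul_pos hR hq
    gcongr
    linarith
  let s : (n : ℕ) → {z : X × Y // Inv n z} := fun n =>
    Nat.rec ⟨(u, y₀), h0⟩ (fun n z => ⟨f n z.1 z.2, (hf n z.1 z.2).1⟩) n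
  let x : ℕ → X := fun n => (s n).1.1
  have hstep : ∀ n, ‖x (n + 1) - x n‖ ≤ R * (1 - q) * q ^ n := fun n =>
    (hf n (s n).1 (s n).2).2.2
  have hy : ∀ n, (s (n + 1)).1.2 = h (x n) := fun n => (hf n (s n).1 (s n).2).2.1
  have hxF : ∀ n, h (x n) ∈ F (x (n + 1)) := fun n => hy n ▸ (s (n + 1)).2.1
  have hxR : ∀ n, ‖x n - u‖ ≤ R := fun n => by
    have := (s n).2.2.2.2
    have := mul_pos hR (pow_pos hq n)
    change ‖(s n).1.1 - u‖ ≤ R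
    linarith
  have hcauchy : CauchySeq x := by
    refine cauchySeq_of_le_geometric q (R * (1 - q)) hq1 fun n => ?_
    rw [dist_comm, dist_eq_norm]
    exact hstep n
  obtain ⟨a, ha⟩ := cauchySeq_tendsto_of_complete hcauchy
  have haR : ‖a - u‖ ≤ R :=
    le_of_tendsto ((ha.sub_const u).norm) (Eventually.of_forall hxR)
  have hha : Tendsto (fun n => h (x n)) atTop (nhds (h a)) := by
    rw [tendsto_iff_norm_sub_tendsto_zero]
    have hlim : Tendsto (fun n => α * q * ‖x n - a‖) atTop (nhds 0) := by
      simpa using (tendsto_iff_norm_sub_tendsto_zero.1 ha).const_mul (α * q)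
    refine squeeze_zero (fun _ => norm_nonneg _) (fun n => hlip _ (hball n _ (s n).2) _ ?_) hlim
    rw [mem_closedBall, dist_eq_norm]
    exact haR.trans hRδ
  refine ⟨a, haR, ?_⟩
  exact hF.mem_of_tendsto ((ha.comp (tendsto_add_atTop_nat 1)).prodMk_nhds hha)
    (Eventually.of_forall hxF)

/-- Lower semicontinuity of the optimal value function
`μ(p) = inf{φ(x,p) : g(x,p) ∈ F(x)}` (Theorem 5.3, first part). -/
theorem optimal_value_lowerSemicontinuous {X Y P : Type*}
    [NormedAddCommGroup X] [CompleteSpace X]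
    [NormedAddCommGroup Y] [TopologicalSpace P]
    (F : X → Set Y) (g : X → P → Y) (φ : X → P → ℝ) (p₀ : P)
    (S : P → Set X) (hSdef : S = fun p => {x : X | g x p ∈ F x})
    (μ : P → EReal) (hμdef : μ = fun p => ⨅ x ∈ S p, ((φ x p : ℝ) : EReal))
    (hFclosed : IsClosed {q : X × Y | q.2 ∈ F q.1})
    (hSne : (S p₀).Nonempty)
    (α ℓ δ : ℝ) (hℓ : 0 ≤ ℓ) (hℓα : ℓ < α) (hδ : 0 < δ)
    (O : Set P) (hO : O ∈ nhds p₀)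
    -- (i) semilocal uniform covering of F
    (hcov : ∀ p ∈ O, ∀ u ∈ S p,
      CoversOn α F (closedBall u δ) (closedBall (g u p₀) (α * δ)))
    -- (ii) g(·,p₀) Lipschitz with modulus ℓ on the balls B(u,δ), u ∈ S(p), p ∈ O
    (hlip : ∀ p ∈ O, ∀ u ∈ S p, ∀ x₁ ∈ closedBall u δ, ∀ x₂ ∈ closedBall u δ,
      ‖g x₁ p₀ - g x₂ p₀‖ ≤ ℓ * ‖x₁ - x₂‖)
    -- (iii) g(x,·) continuous at p₀ uniformly in x ∈ X
    (hgcont : ∀ ε : ℝ, 0 < ε → ∃ W ∈ nhds p₀, ∀ x : X, ∀ p ∈ W,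
      ‖g x p - g x p₀‖ ≤ ε)
    -- (iv) φ uniformly lower semicontinuous at (x,p₀), x ∈ S(p₀)
    (hφlsc : ∀ ε : ℝ, 0 < ε → ∃ ν > (0:ℝ), ∃ O' ∈ nhds p₀,
      ∀ x ∈ S p₀, ∀ p ∈ O', ∀ u : X, ‖u - x‖ ≤ ν → φ x p₀ - ε < φ u p) :
    ∀ ε : ℝ, 0 < ε → ∃ W ∈ nhds p₀, ∀ p ∈ W,
      μ p₀ - (ε : EReal) ≤ μ p := by
  subst hSdef hμdef
  intro ε hε
  obtain ⟨ν, hν, O', hO', hφ⟩ := hφlsc ε hε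
  have hα : 0 < α := hℓ.trans_lt hℓα
  -- The contraction rate is taken strictly above `ℓ / α` so that it is positive even if `ℓ = 0`;
  -- the covering property is only available for positive radii.
  obtain ⟨ℓ', hℓ', hℓ'α⟩ := exists_between hℓα
  have hq : 0 < ℓ' / α := div_pos (hℓ.trans_lt hℓ') hα
  have hq1 : ℓ' / α < 1 := (div_lt_one hα).2 hℓ'α
  have hαq : α * (ℓ' / α) = ℓ' := mul_div_cancel₀ ℓ' hα.ne'
  have hR : 0 < min δ ν := lt_min hδ hν
  obtain ⟨W, hW, hg⟩ := hgcont (α * (min δ ν * (1 - ℓ' / α)))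
    (mul_pos hα (mul_pos hR (by linarith)))
  refine ⟨W ∩ O ∩ O', inter_mem (inter_mem hW hO) hO', ?_⟩
  rintro p ⟨⟨hpW, hpO⟩, hpO'⟩
  refine le_iInf₂ fun u hu => ?_
  obtain ⟨x, hxu, hx⟩ := exists_solution_near (h := fun x => g x p₀) hFclosed hα hq hq1 hR
    (min_le_left δ ν) (hcov p hpO u hu)
    (fun x₁ h₁ x₂ h₂ => (hlip p hpO u hu x₁ h₁ x₂ h₂).trans (by
      rw [hαq]
      gcongr)) hu (hg u p hpW)
  have hlt := hφ x hx p hpO' u (by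
    rw [norm_sub_rev]
    exact hxu.trans (min_le_right δ ν))
  calc (⨅ x ∈ {x : X | g x p₀ ∈ F x}, ((φ x p₀ : ℝ) : EReal)) - (ε : EReal)
      ≤ ((φ x p₀ : ℝ) : EReal) - (ε : EReal) := EReal.sub_le_sub (iInf₂_le x hx) le_rfl
    _ = ((φ x p₀ - ε : ℝ) : EReal) := (EReal.coe_sub _ _).symm
    _ ≤ ((φ u p : ℝ) : EReal) := EReal.coe_le_coe_iff.2 hlt.le
end
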